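/- arXiv:1907.05658 — 2 statements merged into one kernel-verified Lean document; each statement's English description precedes it below -/
import Mathlib

section
/- Let φ_1, …, φ_n : ℝ → ℂ be compactly supported functions and let H be the set of all analytic functions in the shift-invariant space V_Φ generated by φ_1, …, φ_n. Then there exist s ∈ ℕ, complex numbers λ_1, …, λ_s pairwise distinct modulo 2πi, integers d_1, …, d_s ∈ ℕ₀, 1-periodic analytic functions π_{j,k} : ℝ → ℂ (1 ≤ j ≤ s, 0 ≤ k ≤ d_j), and linear subspaces N_j ⊆ M_{d_j} with A_{d_j}(N_j) ⊆ N_j, such that H equals the linear span of L_1 ∪ … ∪ L_s, where L_j = { t ↦ e^{λ_j t} Σ_{k=0}^{d_j} p_k(t)·π_{j,k}(t) : (p_0,…,p_{d_j}) ∈ N_j }. -/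
theorem aux_fwd (ρ : ℝ → ℂ) (hρ : ∀ t, ρ (t + 1) = ρ t) (m : ℕ) (f : ℝ → ℝ) :
    (fwdDiff (1:ℝ))^[m] (fun t : ℝ => (f t : ℂ) * ρ t) =
      fun t => (((fwdDiff (1:ℝ))^[m] f t : ℝ) : ℂ) * ρ t := by
  induction m generalizing f with
  | zero => rfl
  | succ m ih =>
    rw [Function.iterate_succ_apply, Function.iterate_succ_apply, ← ih]
    congr 1
    funext t
    simp only [fwdDiff, hρ]
    push_cast
    ring

theorem aux_fwd_analytic (m : ℕ) (g : ℝ → ℂ) (hg : ∀ x, AnalyticAt ℝ g x) :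
    ∀ x, AnalyticAt ℝ ((fwdDiff (1:ℝ))^[m] g) x := by
  induction m generalizing g with
  | zero => exact hg
  | succ m ih =>
    rw [Function.iterate_succ_apply]
    apply ih
    intro x
    have h1 : AnalyticAt ℝ (fun t : ℝ => g (t + 1)) x :=
      AnalyticAt.fun_comp (hg (x + 1)) (by fun_prop)
    exact h1.sub (hg x)

theorem aux_ofReal_analytic (x : ℝ) : AnalyticAt ℝ (fun t : ℝ => (t : ℂ)) x :=
  Complex.ofRealCLM.analyticAt x

theorem aux_B (m : ℕ) (g : ℝ → ℂ) (hg : ∀ x, AnalyticAt ℝ g x)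
    (h0 : (fwdDiff (1:ℝ))^[m] g = 0) :
    ∃ π : ℕ → ℝ → ℂ, (∀ k, (∀ t : ℝ, π k (t + 1) = π k t) ∧ (∀ x : ℝ, AnalyticAt ℝ (π k) x)) ∧
      ∀ t : ℝ, g t = ∑ k ∈ Finset.range m, (t : ℂ) ^ k * π k t := by
  induction m generalizing g with
  | zero =>
    refine ⟨fun _ _ => 0, fun k => ⟨fun _ => rfl, fun x => analyticAt_const⟩, fun t => ?_⟩
    simpa using congrFun h0 t
  | succ m ih =>
    set ρ : ℝ → ℂ := ((m.factorial : ℂ)⁻¹) • (fwdDiff (1:ℝ))^[m] g with hρdef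
    have hρa : ∀ x, AnalyticAt ℝ ρ x := fun x =>
      (analyticAt_const (v := ((m.factorial : ℂ)⁻¹))).mul (aux_fwd_analytic m g hg x)
    have hρ : ∀ t, ρ (t + 1) = ρ t := by
      intro t
      rw [Function.iterate_succ_apply'] at h0
      have := congrFun h0 t
      simp only [fwdDiff, Pi.zero_apply, sub_eq_zero] at this
      simp only [hρdef, Pi.smul_apply]
      rw [← this]
    set g' : ℝ → ℂ := g + (-1 : ℂ) • (fun t : ℝ => (((t ^ m : ℝ)) : ℂ) * ρ t) with hg'
    have hg'a : ∀ x, AnalyticAt ℝ g' x := by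
      intro x
      have h1 : AnalyticAt ℝ (fun t : ℝ => (((t ^ m : ℝ)) : ℂ) * ρ t) x := by
        refine AnalyticAt.mul ?_ (hρa x)
        simpa using (aux_ofReal_analytic x).fun_pow m
      exact (hg x).add ((analyticAt_const (v := (-1:ℂ))).mul h1)
    have h0' : (fwdDiff (1:ℝ))^[m] g' = 0 := by
      rw [hg', fwdDiff_iter_add, fwdDiff_iter_const_smul, aux_fwd ρ hρ]
      funext t
      have := congrFun (fwdDiff_iter_eq_factorial (R := ℝ) (n := m)) t
      simp only [Pi.add_apply, Pi.smul_apply, this, hρdef]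
      have hne : (m.factorial : ℂ) ≠ 0 := by exact_mod_cast m.factorial_ne_zero
      simp
      field_simp
      ring
    obtain ⟨π, hπ, hs⟩ := ih g' hg'a h0'
    refine ⟨fun k => if k = m then ρ else π k, ?_, ?_⟩
    · intro k
      by_cases hk : k = m
      · simpa [hk] using ⟨hρ, hρa⟩
      · simpa [hk] using hπ k
    · intro t
      rw [Finset.sum_range_succ]
      have h1 : g t = g' t + (t:ℂ) ^ m * ρ t := by simp [hg']
      rw [h1, hs t]
      simp only [if_true]
      congr 1
      apply Finset.sum_congr rfl
      intro k hk
      rw [if_neg (Finset.mem_range.mp hk).ne]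

theorem aux_A (S : Finset (ℝ → ℂ))
    (hS : ∀ g ∈ S, ∃ (m : ℕ) (π : ℕ → ℝ → ℂ),
      (∀ k, (∀ t : ℝ, π k (t + 1) = π k t) ∧ (∀ x : ℝ, AnalyticAt ℝ (π k) x)) ∧
      ∀ t : ℝ, g t = ∑ k ∈ Finset.range m, (t : ℂ) ^ k * π k t) :
    ∃ (d : ℕ) (π : ℕ → ℝ → ℂ),
      (∀ k, (∀ t : ℝ, π k (t + 1) = π k t) ∧ (∀ x : ℝ, AnalyticAt ℝ (π k) x)) ∧
      ∀ g ∈ S, ∃ p : ℕ → Polynomial ℂ, (∀ k : ℕ, (p k).degree ≤ k) ∧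
        ∀ t : ℝ, g t = ∑ k ∈ Finset.range (d + 1), (p k).eval (t : ℂ) * π k t := by
  classical
  induction S using Finset.induction_on with
  | empty =>
    exact ⟨0, fun _ _ => 0, fun k => ⟨fun _ => rfl, fun x => analyticAt_const⟩, by simp⟩
  | insert g S hgS ih =>
    obtain ⟨d, π, hπ, h⟩ := ih (fun g' hg' => hS g' (Finset.mem_insert_of_mem hg'))
    obtain ⟨m, π', hπ', h'⟩ := hS g (Finset.mem_insert_self _ _)
    refine ⟨d + m, fun k => if k < d + 1 then π k else π' (k - (d + 1)), ?_, ?_⟩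
    · intro k
      by_cases hk : k < d + 1
      · simpa [hk] using hπ k
      · simpa [hk] using hπ' _
    · intro f hf
      have hdm : d + m + 1 = (d + 1) + m := by ring
      rcases Finset.mem_insert.mp hf with rfl | hf
      · refine ⟨fun k => if k < d + 1 then 0 else Polynomial.X ^ (k - (d + 1)), ?_, ?_⟩
        · intro k
          dsimp only
          split_ifs
          · simp
          · rw [Polynomial.degree_X_pow]; exact_mod_cast Nat.sub_le _ _
        · intro t
          rw [hdm, Finset.sum_range_add, Finset.sum_eq_zero, zero_add, h' t]
          · apply Finset.sum_congr rfl
            intro k _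
            have hk : ¬ (d + 1 + k < d + 1) := by omega
            simp only [if_neg hk]
            simp
          · intro k hk
            simp [Finset.mem_range.mp hk]
      · obtain ⟨p, hp, hs⟩ := h f hf
        refine ⟨fun k => if k < d + 1 then p k else 0, ?_, ?_⟩
        · intro k
          dsimp only
          split_ifs
          · exact hp k
          · simp
        · intro t
          rw [hdm, Finset.sum_range_add, hs t]
          rw [eq_comm]
          convert add_zero _ using 1
          congr 1
          swap
          · apply Finset.sum_eq_zero
            intro k _
            have hk : ¬ (d + 1 + k < d + 1) := by omega
            simp only [if_neg hk]
            simp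
          · apply Finset.sum_congr rfl
            intro k hk
            simp only [Finset.mem_range.mp hk, if_true]

theorem aux_C (l μ : ℂ) (hl : Complex.exp l = μ) (H : Submodule ℂ (ℝ → ℂ))
    (T : Module.End ℂ H) (hT : ∀ (f : H) (t : ℝ), (T f : ℝ → ℂ) t = (f : ℝ → ℂ) (t + 1))
    (k : ℕ) (f : H) (t : ℝ) :
    ((((T - μ • (1 : Module.End ℂ H)) ^ k) f : H) : ℝ → ℂ) t = Complex.exp (l * t) * μ ^ k *
      (fwdDiff (1:ℝ))^[k] (fun t : ℝ => Complex.exp (-(l * t)) * (f : ℝ → ℂ) t) t := by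
  induction k generalizing t with
  | zero =>
    simp only [pow_zero, Module.End.one_apply, mul_one, Function.iterate_zero, id]
    rw [← mul_assoc, ← Complex.exp_add]; simp
  | succ k ih =>
    rw [pow_succ', Module.End.mul_apply, Function.iterate_succ_apply']
    simp only [LinearMap.sub_apply, LinearMap.smul_apply, Module.End.one_apply,
      Submodule.coe_sub, Submodule.coe_smul, Pi.sub_apply, Pi.smul_apply, hT, ih, fwdDiff,
      smul_eq_mul]
    have : Complex.exp (l * ((t + 1 : ℝ) : ℂ)) = Complex.exp (l * t) * μ := by
      rw [← hl, ← Complex.exp_add]; push_cast; ring_nf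
    rw [this]
    ring

theorem aux_summable {n : ℕ} {φ : Fin n → ℝ → ℂ} {R : ℤ}
    (hR : ∀ j x, φ j x ≠ 0 → |x| ≤ R) (c : Fin n → ℤ → ℂ) (t : ℝ) :
    Summable (fun q : Fin n × ℤ => c q.1 q.2 * φ q.1 (t - (q.2 : ℝ))) := by
  apply summable_of_hasFiniteSupport
  refine Set.Finite.subset (Set.finite_univ.prod (Set.finite_Icc (⌊t⌋ - R) (⌈t⌉ + R))) ?_
  rintro ⟨j, l⟩ h
  have h2 : φ j (t - l) ≠ 0 := right_ne_zero_of_mul h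
  have := abs_le.mp (hR _ _ h2)
  refine ⟨trivial, ?_, ?_⟩
  · have : (⌊t⌋ : ℝ) ≤ l + R := (Int.floor_le t).trans (by linarith)
    have : ⌊t⌋ ≤ l + R := by exact_mod_cast this
    simp only; linarith
  · have : (l : ℝ) ≤ ⌈t⌉ + R := by linarith [Int.le_ceil t]
    exact_mod_cast this

/-- the analytic part of the shift-invariant space -/
def auxH {n : ℕ} (φ : Fin n → ℝ → ℂ) (R : ℤ)
    (hR : ∀ j x, φ j x ≠ 0 → |x| ≤ R) : Submodule ℂ (ℝ → ℂ) where
  carrier := {f : ℝ → ℂ | (∀ x : ℝ, AnalyticAt ℝ f x) ∧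
          ∃ c : Fin n → ℤ → ℂ, ∀ t : ℝ,
            f t = ∑' q : Fin n × ℤ, c q.1 q.2 * φ q.1 (t - (q.2 : ℝ))}
  zero_mem' := ⟨fun _ => analyticAt_const, 0, fun t => by simp⟩
  add_mem' := by
    rintro f g ⟨hf, c, hc⟩ ⟨hg, c', hc'⟩
    refine ⟨fun x => (hf x).add (hg x), c + c', fun t => ?_⟩
    rw [Pi.add_apply, hc, hc', ← (aux_summable hR c t).tsum_add (aux_summable hR c' t)]
    apply tsum_congr
    intro q
    simp only [Pi.add_apply]; ring
  smul_mem' := by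
    rintro a f ⟨hf, c, hc⟩
    refine ⟨fun x => (analyticAt_const (v := a)).mul (hf x), a • c, fun t => ?_⟩
    rw [Pi.smul_apply, hc, smul_eq_mul, ← tsum_mul_left]
    apply tsum_congr
    intro q
    simp only [Pi.smul_apply, smul_eq_mul]; ring

theorem auxH_shift {n : ℕ} (φ : Fin n → ℝ → ℂ) (R : ℤ)
    (hR : ∀ j x, φ j x ≠ 0 → |x| ≤ R) (f : ℝ → ℂ) (hf : f ∈ auxH φ R hR) :
    (fun t => f (t + 1)) ∈ auxH φ R hR := by
  obtain ⟨hf, c, hc⟩ := hf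
  refine ⟨fun x => AnalyticAt.fun_comp (hf (x + 1)) (by fun_prop), fun j l => c j (l + 1),
    fun t => ?_⟩
  show f (t + 1) = _
  rw [hc, ← ((Equiv.refl (Fin n)).prodCongr (Equiv.addRight (1:ℤ))).tsum_eq]
  apply tsum_congr
  rintro ⟨j, l⟩
  simp

theorem auxH_finite {n : ℕ} (φ : Fin n → ℝ → ℂ) (R : ℤ)
    (hR : ∀ j x, φ j x ≠ 0 → |x| ≤ R) : FiniteDimensional ℂ (auxH φ R hR) := by
  classical
  let r : (ℝ → ℂ) →ₗ[ℂ] (Set.Icc (0:ℝ) 1 → ℂ) := LinearMap.funLeft ℂ ℂ Subtype.val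
  let F : Finset (Fin n × ℤ) := Finset.univ ×ˢ Finset.Icc (-R) (R + 1)
  let b : Fin n × ℤ → (Set.Icc (0:ℝ) 1 → ℂ) := fun q t => φ q.1 ((t : ℝ) - (q.2 : ℝ))
  let W : Submodule ℂ (Set.Icc (0:ℝ) 1 → ℂ) := Submodule.span ℂ (b '' (F : Set (Fin n × ℤ)))
  have hW : FiniteDimensional ℂ W :=
    FiniteDimensional.span_of_finite ℂ (F.finite_toSet.image b)
  have hmem : ∀ f : auxH φ R hR, (r.comp (auxH φ R hR).subtype) f ∈ W := by
    rintro ⟨f, hf, c, hc⟩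
    have : (r.comp (auxH φ R hR).subtype) ⟨f, hf, c, hc⟩ = ∑ q ∈ F, c q.1 q.2 • b q := by
      funext t
      simp only [Finset.sum_apply, Pi.smul_apply, smul_eq_mul]
      change f t = _
      rw [hc, tsum_eq_sum]
      rintro ⟨j, l⟩ hq
      by_contra h
      have h2 : φ j (t - l) ≠ 0 := right_ne_zero_of_mul h
      have h3 := abs_le.mp (hR _ _ h2)
      have h4 := t.2.1
      have h5 := t.2.2
      apply hq
      simp only [F, Finset.mem_product, Finset.mem_univ, true_and, Finset.mem_Icc]
      constructor
      · have : (-R : ℝ) ≤ l := by linarith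
        exact_mod_cast this
      · have : (l : ℝ) ≤ R + 1 := by linarith
        exact_mod_cast this
    rw [this]
    exact Submodule.sum_mem _ fun q hq => Submodule.smul_mem _ _
      (Submodule.subset_span ⟨q, hq, rfl⟩)
  let G := (r.comp (auxH φ R hR).subtype).codRestrict W hmem
  refine FiniteDimensional.of_injective G ?_
  rintro ⟨f, hf⟩ ⟨g, hg⟩ h
  apply Subtype.ext
  have h' : r f = r g := congrArg Subtype.val h
  refine AnalyticOnNhd.eq_of_eventuallyEq (𝕜 := ℝ) (fun x _ => hf.1 x) (fun x _ => hg.1 x)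
    (z₀ := (1/2 : ℝ)) ?_
  filter_upwards [Icc_mem_nhds (show (0:ℝ) < 1/2 by norm_num) (show (1/2:ℝ) < 1 by norm_num)]
    with x hx
  exact congrFun h' ⟨x, hx⟩


/-- The set `H` of all analytic functions in the shift-invariant space `V_Φ`
generated by compactly supported `φ_1, …, φ_n` is a span of spaces `L_1, …, L_s`, where
`L_j = { t ↦ e^{λ_j t} Σ_{k=0}^{d_j} p_k(t)·π_{j,k}(t) : (p_0,…,p_{d_j}) ∈ N_j }` for
pairwise distinct modulo `2πi` numbers `λ_j`, 1-periodic analytic functions `π_{j,k}`, and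
subspaces `N_j ⊆ M_{d_j}` invariant under the shift operator `A_{d_j}`. -/
theorem stmt_9 (n : ℕ) (φ : Fin n → ℝ → ℂ) (hsupp : ∀ j, HasCompactSupport (φ j)) :
    ∃ (s : ℕ) (lam : Fin s → ℂ) (d : Fin s → ℕ) (π : Fin s → ℕ → ℝ → ℂ)
      (Nsp : (j : Fin s) → Submodule ℂ (Fin (d j + 1) → Polynomial ℂ)),
      (∀ j m : Fin s, j ≠ m → ∀ k : ℤ, lam j - lam m ≠ 2 * Real.pi * Complex.I * k) ∧
      (∀ j : Fin s, ∀ k ≤ d j,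
        (∀ t : ℝ, π j k (t + 1) = π j k t) ∧ (∀ x : ℝ, AnalyticAt ℝ (π j k) x)) ∧
      (∀ j : Fin s, ∀ p ∈ Nsp j, ∀ k : Fin (d j + 1), (p k).degree ≤ (k : ℕ)) ∧
      (∀ j : Fin s, ∀ p ∈ Nsp j, (fun k => (p k).comp (Polynomial.X + 1)) ∈ Nsp j) ∧
      {f : ℝ → ℂ | (∀ x : ℝ, AnalyticAt ℝ f x) ∧
          ∃ c : Fin n → ℤ → ℂ, ∀ t : ℝ,
            f t = ∑' q : Fin n × ℤ, c q.1 q.2 * φ q.1 (t - (q.2 : ℝ))}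
        = ↑(Submodule.span ℂ (⋃ j : Fin s,
            {g : ℝ → ℂ | ∃ p ∈ Nsp j, g = fun t : ℝ =>
              Complex.exp (lam j * (t : ℂ)) *
                ∑ k : Fin (d j + 1), (p k).eval (t : ℂ) * π j (k : ℕ) t})) := by
  classical
  obtain ⟨R, hR⟩ : ∃ R : ℤ, ∀ j x, φ j x ≠ 0 → |x| ≤ R := by
    have h1 : ∀ j, ∃ C : ℝ, ∀ x, φ j x ≠ 0 → |x| ≤ C := by
      intro j
      obtain ⟨C, hC⟩ := (hsupp j).isCompact.isBounded.exists_norm_le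
      exact ⟨C, fun x hx => hC x (subset_tsupport _ hx)⟩
    choose C hC using h1
    refine ⟨⌈∑ j, |C j|⌉, fun j x hx => (hC j x hx).trans ?_⟩
    refine le_trans ?_ (Int.le_ceil _)
    exact (le_abs_self _).trans
      (Finset.single_le_sum (f := fun j => |C j|) (fun i _ => abs_nonneg _) (Finset.mem_univ j))
  let H := auxH φ R hR
  haveI : FiniteDimensional ℂ H := auxH_finite φ R hR
  let T : Module.End ℂ H :=
    { toFun := fun f => ⟨fun t => (f : ℝ → ℂ) (t + 1), auxH_shift φ R hR f f.2⟩
      map_add' := fun _ _ => rfl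
      map_smul' := fun _ _ => rfl }
  have hT : ∀ (f : H) (t : ℝ), (T f : ℝ → ℂ) t = (f : ℝ → ℂ) (t + 1) := fun _ _ => rfl
  have hfin : Finite {μ | T.HasEigenvalue μ} := T.finite_hasEigenvalue
  obtain ⟨s, ⟨e⟩⟩ := Finite.exists_equiv_fin {μ | T.HasEigenvalue μ}
  let ev : Fin s → ℂ := fun j => (e.symm j : ℂ)
  have hev : ∀ j, T.HasEigenvalue (ev j) := fun j => (e.symm j).2
  have hev_inj : Function.Injective ev := Subtype.val_injective.comp e.symm.injective
  have hev0 : ∀ j, ev j ≠ 0 := by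
    intro j h0
    obtain ⟨v, hv⟩ := (hev j).exists_hasEigenvector
    apply hv.2
    have h1 := hv.apply_eq_smul
    rw [h0, zero_smul] at h1
    apply Subtype.ext
    funext t
    have := hT v (t - 1)
    rw [h1] at this
    simpa using this.symm
  have hexp : ∀ j, Complex.exp (Complex.log (ev j)) = ev j := fun j => Complex.exp_log (hev0 j)
  -- the periodic functions
  have key : ∀ j : Fin s, ∃ (d : ℕ) (π : ℕ → ℝ → ℂ),
      (∀ k, (∀ t : ℝ, π k (t + 1) = π k t) ∧ (∀ x : ℝ, AnalyticAt ℝ (π k) x)) ∧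
      ∃ S : Finset H, Submodule.span ℂ (S : Set H) = T.maxGenEigenspace (ev j) ∧
      ∀ f ∈ S, ∃ p : ℕ → Polynomial ℂ, (∀ k : ℕ, (p k).degree ≤ k) ∧
        ∀ t : ℝ, (f : ℝ → ℂ) t = Complex.exp (Complex.log (ev j) * (t : ℂ)) *
          ∑ k ∈ Finset.range (d + 1), (p k).eval (t : ℂ) * π k t := by
    intro j
    obtain ⟨S, hS⟩ := (IsNoetherian.noetherian (T.maxGenEigenspace (ev j)))
    let E : H → ℝ → ℂ := fun f t => Complex.exp (-(Complex.log (ev j) * t)) * (f : ℝ → ℂ) t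
    obtain ⟨d, π, hπ, h⟩ := aux_A (S.image E) (by
      intro g hg
      obtain ⟨f, hf, rfl⟩ := Finset.mem_image.mp hg
      have hf' : f ∈ T.maxGenEigenspace (ev j) := hS ▸ Submodule.subset_span hf
      obtain ⟨m, hm⟩ := (Module.End.mem_maxGenEigenspace _ _ _).mp hf'
      refine ⟨m, aux_B m (E f) ?_ ?_⟩
      · intro x
        refine AnalyticAt.mul ?_ (f.2.1 x)
        have h1 : AnalyticAt ℝ (fun t : ℝ => -(Complex.log (ev j) * (t : ℂ))) x :=
          (analyticAt_const.mul (aux_ofReal_analytic x)).neg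
        exact AnalyticAt.fun_comp (g := Complex.exp) (analyticAt_cexp.restrictScalars) h1
      · funext t
        have h1 := aux_C _ _ (hexp j) H T hT m f t
        rw [hm] at h1
        have h2 : Complex.exp (Complex.log (ev j) * t) * ev j ^ m ≠ 0 :=
          mul_ne_zero (Complex.exp_ne_zero _) (pow_ne_zero _ (hev0 j))
        exact (mul_eq_zero.mp h1.symm).resolve_left h2)
    refine ⟨d, π, hπ, S, hS, fun f hf => ?_⟩
    obtain ⟨p, hp, hs⟩ := h (E f) (Finset.mem_image_of_mem _ hf)
    refine ⟨p, hp, fun t => ?_⟩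
    rw [← hs t, ← mul_assoc, ← Complex.exp_add]
    simp
  choose d π hπ S hS hSp using key
  let L : (j : Fin s) → (Fin (d j + 1) → Polynomial ℂ) → ℝ → ℂ := fun j p t =>
    Complex.exp (Complex.log (ev j) * (t : ℂ)) *
      ∑ k : Fin (d j + 1), (p k).eval (t : ℂ) * π j (k : ℕ) t
  let Nsp : (j : Fin s) → Submodule ℂ (Fin (d j + 1) → Polynomial ℂ) := fun j =>
    { carrier := {p | (∀ k : Fin (d j + 1), (p k).degree ≤ (k : ℕ)) ∧ L j p ∈ H}
      zero_mem' := by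
        refine ⟨fun k => by simp, ?_⟩
        have : L j 0 = 0 := by funext t; simp [L]
        rw [this]; exact H.zero_mem
      add_mem' := by
        rintro p q ⟨hp, hp'⟩ ⟨hq, hq'⟩
        refine ⟨fun k => (Polynomial.degree_add_le _ _).trans (max_le (hp k) (hq k)), ?_⟩
        have : L j (p + q) = L j p + L j q := by
          funext t
          simp [L, add_mul, Finset.sum_add_distrib, mul_add]
        rw [this]; exact H.add_mem hp' hq'
      smul_mem' := by
        rintro a p ⟨hp, hp'⟩
        refine ⟨fun k => (Polynomial.degree_smul_le _ _).trans (hp k), ?_⟩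
        have : L j (a • p) = a • L j p := by
          funext t
          simp only [L, Pi.smul_apply, Polynomial.eval_smul, smul_eq_mul, Finset.mul_sum]
          refine Finset.sum_congr rfl fun k _ => ?_
          ring
        rw [this]; exact H.smul_mem _ hp' }
  refine ⟨s, fun j => Complex.log (ev j), d, π, Nsp, ?_, fun j k _ => hπ j k,
    fun j p hp => hp.1, ?_, ?_⟩
  · intro j m hjm k hk
    apply hjm
    apply hev_inj
    rw [← hexp j, ← hexp m, Complex.exp_eq_exp_iff_exists_int]
    exact ⟨k, by rw [← sub_eq_iff_eq_add', hk]; ring⟩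
  · rintro j p ⟨hp, hp'⟩
    refine ⟨fun k => ?_, ?_⟩
    · have h1 : (Polynomial.X + 1 : Polynomial ℂ).natDegree = 1 := by
        simpa using Polynomial.natDegree_X_add_C (1 : ℂ)
      refine Polynomial.natDegree_le_iff_degree_le.mp ?_
      rw [Polynomial.natDegree_comp, h1, mul_one]
      exact Polynomial.natDegree_le_iff_degree_le.mpr (hp k)
    · have h1 : L j (fun k => (p k).comp (Polynomial.X + 1)) =
          (ev j)⁻¹ • fun t => L j p (t + 1) := by
        funext t
        have h2 : Complex.exp (Complex.log (ev j) * ((t + 1 : ℝ) : ℂ)) =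
            Complex.exp (Complex.log (ev j) * t) * ev j := by
          have h3 : Complex.log (ev j) * ((t + 1 : ℝ) : ℂ) =
              Complex.log (ev j) * t + Complex.log (ev j) := by push_cast; ring
          rw [h3, Complex.exp_add, hexp]
        simp only [L, Pi.smul_apply, smul_eq_mul, h2, (hπ j _).1]
        have := hev0 j
        field_simp
        simp
      rw [h1]
      exact H.smul_mem _ (auxH_shift φ R hR _ hp')
  · change (H : Set (ℝ → ℂ)) = _
    congr 1
    apply le_antisymm
    · have h1 : (⊤ : Submodule ℂ H) ≤ (Submodule.span ℂ (⋃ j : Fin s,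
            {g : ℝ → ℂ | ∃ p ∈ Nsp j, g = L j p})).comap H.subtype := by
        rw [← Module.End.iSup_maxGenEigenspace_eq_top T]
        apply iSup_le
        intro μ
        by_cases hμ : T.HasEigenvalue μ
        · obtain ⟨j, rfl⟩ : ∃ j, ev j = μ := ⟨e ⟨μ, hμ⟩, by simp [ev]⟩
          rw [← hS j, Submodule.span_le]
          intro f hf
          obtain ⟨p, hp, hs⟩ := hSp j f hf
          apply Submodule.subset_span
          refine Set.mem_iUnion.mpr ⟨j, fun k => p k, ?_, ?_⟩
          all_goals
            have h2 : (f : ℝ → ℂ) = L j (fun k => p k) := by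
              funext t
              rw [hs t, Finset.sum_range]
          · exact ⟨fun k => hp k, h2 ▸ f.2⟩
          · exact h2
        · have h2 : T.maxGenEigenspace μ = ⊥ := by
            by_contra h3
            exact hμ ((Module.End.hasUnifEigenvalue_iff_hasUnifEigenvalue_one
              (k := ⊤) (by simp)).mp h3)
          rw [h2]; exact bot_le
      intro f hf
      exact h1 (show (⟨f, hf⟩ : H) ∈ ⊤ from trivial)
    · rw [Submodule.span_le]
      intro g hg
      obtain ⟨j, p, hp, rfl⟩ := Set.mem_iUnion.mp hg
      exact hp.2
end

section
/- Let φ : ℝ → ℂ be continuous, integrable and compactly supported, let λ ∈ ℂ and d ∈ ℕ₀, and suppose there exist C > 0 and q ∈ (0,1) such that |φ̂^{(k)}(−iλ/(2π) + ℓ)| ≤ C·q^{|ℓ|} for all ℓ ∈ ℤ and all k = 0, …, d. For k = 0, …, d define ω_k(t) = Σ_{ℓ∈ℤ} (t−ℓ)^k · e^{−λ(t−ℓ)} · φ(t−ℓ). Then each ω_k is 1-periodic and analytic on ℝ, and for every k = 0, …, d and every t ∈ ℝ, Σ_{ℓ∈ℤ} e^{λℓ}·ℓ^k·φ(t−ℓ)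 = e^{λt} Σ_{j=0}^k C(k,j)·t^{k−j}·(−1)^j·ω_j(t), where C(k,j) is the binomial coefficient. In particular, for every polynomial p of degree at most d, the function t ↦ Σ_{ℓ∈ℤ} e^{λℓ}·p(ℓ)·φ(t−ℓ) is an analytic function belonging to V_φ. -/
open MeasureTheory

/-- The Fourier transform of `φ`, analytically extended to `ℂ`:
`φ̂(z) = ∫_ℝ φ(x)·e^{−2πi x z} dx`. -/
noncomputable def fourierExt (φ : ℝ → ℂ) (z : ℂ) : ℂ :=
  ∫ x : ℝ, φ x * Complex.exp (-(2 * (Real.pi : ℂ) * Complex.I * (x : ℂ) * z))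

/-- `ω_k(t) = Σ_{ℓ∈ℤ} (t−ℓ)^k·e^{−λ(t−ℓ)}·φ(t−ℓ)`. -/
noncomputable def omegaFun (φ : ℝ → ℂ) (lam : ℂ) (k : ℕ) (t : ℝ) : ℂ :=
  ∑' ℓ : ℤ, ((t : ℂ) - (ℓ : ℂ)) ^ k * Complex.exp (-lam * ((t : ℂ) - (ℓ : ℂ))) * φ (t - (ℓ : ℝ))

lemma aux_summable_int {r : ℝ} (h0 : 0 ≤ r) (h1 : r < 1) :
    Summable fun n : ℤ => r ^ n.natAbs := by
  apply Summable.of_nat_of_neg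
  · simpa using summable_geometric_of_lt_one h0 h1
  · simpa using summable_geometric_of_lt_one h0 h1

lemma aux_summable_s11 (φ : ℝ → ℂ) (hsupp : HasCompactSupport φ) (a : ℤ → ℂ) (t : ℝ) :
    Summable fun ℓ : ℤ => a ℓ * φ (t - (ℓ : ℝ)) := by
  have hcl : Topology.IsClosedEmbedding (fun ℓ : ℤ => t - (ℓ : ℝ)) :=
    (Homeomorph.subLeft t).isClosedEmbedding.comp Int.isClosedEmbedding_coe_real
  have hfin : (Function.support fun ℓ : ℤ => φ (t - (ℓ : ℝ))).Finite := by
    have := (hsupp.comp_isClosedEmbedding hcl)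
    have h2 : (tsupport (φ ∘ fun ℓ : ℤ => t - (ℓ : ℝ))).Finite := this.isCompact.finite_of_discrete
    exact h2.subset (subset_tsupport _)
  apply summable_of_hasFiniteSupport
  refine hfin.subset ?_
  intro ℓ hℓ h
  apply hℓ
  simp [h]

lemma aux_deriv (φ : ℝ → ℂ) (hcont : Continuous φ) (hsupp : HasCompactSupport φ) (z : ℂ) :
    HasDerivAt (fourierExt φ)
      (fourierExt (fun x => -(2 * (Real.pi : ℂ) * Complex.I * (x : ℂ)) * φ x) z) z := by
  let F : ℂ → ℝ → ℂ := fun w x =>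
    φ x * Complex.exp (-(2 * (Real.pi : ℂ) * Complex.I * (x : ℂ) * w))
  let F' : ℂ → ℝ → ℂ := fun w x =>
    (-(2 * (Real.pi : ℂ) * Complex.I * (x : ℂ)) * φ x) *
      Complex.exp (-(2 * (Real.pi : ℂ) * Complex.I * (x : ℂ) * w))
  let b : ℝ → ℝ := fun x =>
    ‖φ x‖ * (‖(2 * (Real.pi : ℂ) * Complex.I * (x : ℂ))‖ *
      Real.exp (‖(2 * (Real.pi : ℂ) * Complex.I * (x : ℂ))‖ * (‖z‖ + 1)))
  have hF : ∀ w, Continuous (F w) := fun w => by fun_prop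
  have hF' : ∀ w, Continuous (F' w) := fun w => by fun_prop
  have hb : Integrable b := by
    apply Continuous.integrable_of_hasCompactSupport
    · fun_prop
    · exact hsupp.norm.mul_right
  refine (hasDerivAt_integral_of_dominated_loc_of_deriv_le (F := F) (F' := F') (bound := b)
    (μ := volume) (Metric.ball_mem_nhds z one_pos) (Filter.Eventually.of_forall fun w =>
      (hF w).aestronglyMeasurable) ?_ (hF' z).aestronglyMeasurable ?_ hb ?_).2
  · exact (hF z).integrable_of_hasCompactSupport hsupp.mul_right
  · refine Filter.Eventually.of_forall fun x w hw => ?_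
    have hw' : ‖w‖ ≤ ‖z‖ + 1 := by
      have h1 : ‖w - z‖ < 1 := by simpa [dist_eq_norm] using hw
      have h2 := norm_add_le (w - z) z
      rw [sub_add_cancel] at h2
      linarith
    simp only [F', b]
    rw [norm_mul, norm_mul, norm_neg, mul_comm ‖(2 * (Real.pi : ℂ) * Complex.I * (x : ℂ))‖ ‖φ x‖,
      mul_assoc]
    gcongr
    refine (Complex.norm_exp_le_exp_norm _).trans ?_
    rw [norm_neg, norm_mul]
    gcongr
  · refine Filter.Eventually.of_forall fun x w _ => ?_
    simp only [F, F']
    have h := (((hasDerivAt_id w).const_mul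
      (2 * (Real.pi : ℂ) * Complex.I * (x : ℂ))).neg.cexp).const_mul (φ x)
    refine h.congr_deriv ?_
    simp only [id, Pi.neg_apply]
    ring

lemma aux_iter (φ : ℝ → ℂ) (hcont : Continuous φ) (hsupp : HasCompactSupport φ) (k : ℕ) :
    iteratedDeriv k (fourierExt φ) =
      fourierExt (fun x => (-(2 * (Real.pi : ℂ) * Complex.I * (x : ℂ))) ^ k * φ x) := by
  induction k with
  | zero => simp
  | succ k ih =>
    rw [iteratedDeriv_succ, ih]
    funext z
    rw [(aux_deriv (fun x => (-(2 * (Real.pi : ℂ) * Complex.I * (x : ℂ))) ^ k * φ x) (by fun_prop) hsupp.mul_left z).deriv]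
    congr 1
    funext x
    ring

lemma aux_fourier (φ : ℝ → ℂ) (hcont : Continuous φ) (hsupp : HasCompactSupport φ) (lam : ℂ)
    (k : ℕ) (n : ℤ) :
    (-(2 * (Real.pi : ℂ) * Complex.I)) ^ k * FourierTransform.fourier
      (fun x : ℝ => (x : ℂ) ^ k * Complex.exp (-lam * (x : ℂ)) * φ x) (n : ℝ) =
      iteratedDeriv k (fourierExt φ)
          (-(Complex.I * lam) / (2 * (Real.pi : ℂ)) + (n : ℂ)) := by
  rw [aux_iter φ hcont hsupp, Real.fourier_real_eq_integral_exp_smul, fourierExt,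
    ← integral_const_mul]
  congr 1
  funext x
  have hpi : (Real.pi : ℂ) ≠ 0 := by exact_mod_cast Real.pi_ne_zero
  have : -(2 * (Real.pi : ℂ) * Complex.I * (x : ℂ) *
      (-(Complex.I * lam) / (2 * (Real.pi : ℂ)) + (n : ℂ))) =
      ((-2 * Real.pi * x * (n : ℝ) : ℝ) : ℂ) * Complex.I + -lam * x := by
    push_cast
    field_simp
    linear_combination (x * lam : ℂ) * Complex.I_sq
  rw [this, Complex.exp_add, smul_eq_mul]
  ring

lemma aux_analytic (c : ℤ → ℂ) (C q : ℝ) (hC : 0 ≤ C) (hq : q ∈ Set.Ioo (0 : ℝ) 1)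
    (hc : ∀ n, ‖c n‖ ≤ C * q ^ n.natAbs) (x : ℝ) :
    AnalyticAt ℝ (fun t : ℝ => ∑' n : ℤ, c n * Complex.exp (2 * Real.pi * Complex.I * n * t)) x := by
  obtain ⟨hq0, hq1⟩ := hq
  obtain ⟨δ, hδ, hr⟩ : ∃ δ : ℝ, 0 < δ ∧ q * Real.exp (2 * Real.pi * δ) < 1 := by
    have hl := Real.log_neg hq0 hq1
    have hpi := Real.pi_pos
    refine ⟨-Real.log q / (4 * Real.pi), by apply div_pos <;> linarith, ?_⟩
    nth_rewrite 1 [← Real.exp_log hq0]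
    rw [← Real.exp_add, Real.exp_lt_one_iff]
    have : 2 * Real.pi * (-Real.log q / (4 * Real.pi)) = - Real.log q / 2 := by
      field_simp; ring
    rw [this]; linarith
  set r := q * Real.exp (2 * Real.pi * δ) with hrdef
  have hr0 : 0 ≤ r := by positivity
  let U : Set ℂ := {z | |z.im| < δ}
  have hU : IsOpen U := isOpen_lt (by fun_prop) continuous_const
  have hd : DifferentiableOn ℂ (fun z : ℂ => ∑' n : ℤ,
      c n * Complex.exp (2 * Real.pi * Complex.I * n * z)) U := by
    refine Complex.differentiableOn_tsum_of_summable_norm (u := fun n : ℤ => C * r ^ n.natAbs)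
      ((aux_summable_int hr0 hr).mul_left C) (fun n => ?_) hU ?_
    · fun_prop
    · intro n w hw
      have hw' : |w.im| < δ := hw
      rw [norm_mul, Complex.norm_exp, hrdef, mul_pow, ← mul_assoc]
      refine mul_le_mul (hc n) ?_ (Real.exp_pos _).le (by positivity)
      rw [← Real.exp_nat_mul, Real.exp_le_exp]
      have hre : (2 * Real.pi * Complex.I * n * w : ℂ).re = 2 * Real.pi * (-(n * w.im)) := by
        have : (2 * Real.pi * Complex.I * n * w : ℂ) =
          ((2 * Real.pi * n : ℝ) : ℂ) * (Complex.I * w) := by push_cast; ring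
        rw [this, Complex.re_ofReal_mul, Complex.I_mul_re]; ring
      rw [hre]
      have h1 : -((n : ℝ) * w.im) ≤ |(n : ℝ)| * δ := by
        refine (neg_le_abs _).trans ?_
        rw [abs_mul]
        gcongr
      have h2 : ((n.natAbs : ℕ) : ℝ) = |(n : ℝ)| := by
        rw [Nat.cast_natAbs, Int.cast_abs]
      rw [h2]
      have := mul_le_mul_of_nonneg_left h1 (by positivity : 0 ≤ 2 * Real.pi)
      linarith
  have ha := hd.analyticAt (hU.mem_nhds (show (x : ℂ) ∈ U by simpa [U] using hδ))
  exact ha.restrictScalars.comp (f := fun t : ℝ => (t : ℂ)) (Complex.ofRealCLM.analyticAt x)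

lemma aux_omega (φ : ℝ → ℂ) (hcont : Continuous φ)
    (hsupp : HasCompactSupport φ) (lam : ℂ) (k : ℕ)
    (C : ℝ) (hC : 0 < C) (q : ℝ) (hq : q ∈ Set.Ioo (0 : ℝ) 1)
    (hdecay : ∀ ℓ : ℤ,
      ‖iteratedDeriv k (fourierExt φ)
          (-(Complex.I * lam) / (2 * (Real.pi : ℂ)) + (ℓ : ℂ))‖ ≤ C * q ^ ℓ.natAbs) (x : ℝ) :
    AnalyticAt ℝ (omegaFun φ lam k) x := by
  let g : ℝ → ℂ := fun x : ℝ => (x : ℂ) ^ k * Complex.exp (-lam * (x : ℂ)) * φ x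
  have hg : Continuous g := by fun_prop
  have hgs : HasCompactSupport g := hsupp.mul_left
  let D : ℝ := ‖((-(2 * (Real.pi : ℂ) * Complex.I)) ^ k)⁻¹‖
  have hne : (-(2 * (Real.pi : ℂ) * Complex.I)) ^ k ≠ 0 := by
    apply pow_ne_zero
    simp [Real.pi_ne_zero]
  have hbd : ∀ n : ℤ, ‖FourierTransform.fourier g (n : ℝ)‖ ≤ (D * C) * q ^ n.natAbs := by
    intro n
    have h := aux_fourier φ hcont hsupp lam k n
    have h2 : FourierTransform.fourier g (n : ℝ) = ((-(2 * (Real.pi : ℂ) * Complex.I)) ^ k)⁻¹ *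
      iteratedDeriv k (fourierExt φ) (-(Complex.I * lam) / (2 * (Real.pi : ℂ)) + (n : ℂ)) := by
      rw [← h, inv_mul_cancel_left₀ hne]
    have hD : 0 ≤ D := norm_nonneg ((-(2 * (Real.pi : ℂ) * Complex.I)) ^ k)⁻¹
    rw [h2, norm_mul, mul_assoc D C]
    exact mul_le_mul_of_nonneg_left (hdecay n) hD
  have hsum : Summable fun n : ℤ => FourierTransform.fourier g (n : ℝ) :=
    Summable.of_norm_bounded (g := fun n : ℤ => D * C * q ^ n.natAbs) ((aux_summable_int hq.1.le hq.2).mul_left (D * C)) hbd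
  have hO : Asymptotics.IsBigO (Filter.cocompact ℝ) g (fun x : ℝ => |x| ^ (-2 : ℝ)) := by
    have h0 : g =ᶠ[Filter.cocompact ℝ] 0 := by
      rw [← Filter.coclosedCompact_eq_cocompact]
      exact (hasCompactSupport_iff_eventuallyEq (f := g)).mp hgs
    refine h0.trans_isBigO ?_
    exact Asymptotics.isBigO_zero (E' := ℂ) _ _
  have heq : omegaFun φ lam k = fun t : ℝ => ∑' n : ℤ, FourierTransform.fourier g (n : ℝ) *
      Complex.exp (2 * Real.pi * Complex.I * n * t) := by
    funext t
    have hP := Real.tsum_eq_tsum_fourier_of_rpow_decay_of_summable hg one_lt_two hO hsum t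
    simp only [fourier_coe_apply, Complex.ofReal_one, div_one] at hP
    rw [← hP, ← (Equiv.neg ℤ).tsum_eq]
    refine tsum_congr fun n => ?_
    simp [g, sub_eq_add_neg]
  rw [heq]
  exact aux_analytic _ (D * C) q (by positivity) hq hbd x

lemma aux_binom (φ : ℝ → ℂ) (hsupp : HasCompactSupport φ) (lam : ℂ) (k : ℕ) (t : ℝ) :
      ∑' ℓ : ℤ, Complex.exp (lam * (ℓ : ℂ)) * (ℓ : ℂ) ^ k * φ (t - (ℓ : ℝ))
        = Complex.exp (lam * (t : ℂ)) * ∑ j ∈ Finset.range (k + 1),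
            (Nat.choose k j : ℂ) * (t : ℂ) ^ (k - j) * (-1) ^ j * omegaFun φ lam j t := by
  simp only [omegaFun, ← tsum_mul_left]
  rw [← Summable.tsum_finsetSum]
  · rw [← tsum_mul_left]
    refine tsum_congr fun ℓ => ?_
    have h1 : Complex.exp (lam * (ℓ : ℂ)) =
        Complex.exp (lam * t) * Complex.exp (-lam * ((t : ℂ) - ℓ)) := by
      rw [← Complex.exp_add]; congr 1; ring
    have h2 : (ℓ : ℂ) ^ k = ∑ j ∈ Finset.range (k + 1),
        (Nat.choose k j : ℂ) * (t : ℂ) ^ (k - j) * (-1) ^ j * ((t : ℂ) - ℓ) ^ j := by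
      have : (ℓ : ℂ) = (-1) * ((t : ℂ) - ℓ) + t := by ring
      conv_lhs => rw [this, add_pow]
      refine Finset.sum_congr rfl fun j _ => ?_
      rw [mul_pow]; ring
    rw [h1, h2, Finset.mul_sum, Finset.sum_mul, Finset.mul_sum]
    refine Finset.sum_congr rfl fun j _ => ?_
    ring
  · intro j _
    exact (aux_summable_s11 φ hsupp _ t).mul_left _

/-- If the sequences `{φ̂^{(k)}(−iλ/(2π)+ℓ) : ℓ ∈ ℤ}`, `k = 0,…,d`, decay
exponentially, then the functions `ω_k` are 1-periodic analytic,
`Σ_ℓ e^{λℓ}·ℓ^k·φ(t−ℓ) = e^{λt} Σ_{j=0}^k C(k,j)·t^{k−j}·(−1)^j·ω_j(t)`, and for every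
polynomial `p` with `deg p ≤ d` the function `t ↦ Σ_ℓ e^{λℓ}·p(ℓ)·φ(t−ℓ)` is an analytic
member of `V_φ`. -/
theorem stmt_11 (φ : ℝ → ℂ) (hcont : Continuous φ) (hint : Integrable φ)
    (hsupp : HasCompactSupport φ) (lam : ℂ) (d : ℕ)
    (C : ℝ) (hC : 0 < C) (q : ℝ) (hq : q ∈ Set.Ioo (0 : ℝ) 1)
    (hdecay : ∀ k ≤ d, ∀ ℓ : ℤ,
      ‖iteratedDeriv k (fourierExt φ)
          (-(Complex.I * lam) / (2 * (Real.pi : ℂ)) + (ℓ : ℂ))‖ ≤ C * q ^ ℓ.natAbs) :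
    (∀ k ≤ d, (∀ t : ℝ, omegaFun φ lam k (t + 1) = omegaFun φ lam k t) ∧
      (∀ x : ℝ, AnalyticAt ℝ (omegaFun φ lam k) x)) ∧
    (∀ k ≤ d, ∀ t : ℝ,
      ∑' ℓ : ℤ, Complex.exp (lam * (ℓ : ℂ)) * (ℓ : ℂ) ^ k * φ (t - (ℓ : ℝ))
        = Complex.exp (lam * (t : ℂ)) * ∑ j ∈ Finset.range (k + 1),
            (Nat.choose k j : ℂ) * (t : ℂ) ^ (k - j) * (-1) ^ j * omegaFun φ lam j t) ∧
    (∀ p : Polynomial ℂ, p.degree ≤ d →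
      (∀ x : ℝ, AnalyticAt ℝ
        (fun t : ℝ => ∑' ℓ : ℤ, Complex.exp (lam * (ℓ : ℂ)) * p.eval (ℓ : ℂ) * φ (t - (ℓ : ℝ))) x) ∧
      ∃ a : ℤ → ℂ, ∀ t : ℝ,
        (∑' ℓ : ℤ, Complex.exp (lam * (ℓ : ℂ)) * p.eval (ℓ : ℂ) * φ (t - (ℓ : ℝ)))
          = ∑' ℓ : ℤ, a ℓ * φ (t - (ℓ : ℝ))) := by
  have hA : ∀ k ≤ d, ∀ x : ℝ, AnalyticAt ℝ (omegaFun φ lam k) x := fun k hk x =>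
    aux_omega φ hcont hsupp lam k C hC q hq (hdecay k hk) x
  refine ⟨fun k hk => ⟨fun t => ?_, hA k hk⟩, fun k _ t => aux_binom φ hsupp lam k t,
    fun p hp => ⟨fun x => ?_, _, fun t => rfl⟩⟩
  · unfold omegaFun
    rw [← (Equiv.addRight (1 : ℤ)).tsum_eq]
    refine tsum_congr fun n => ?_
    simp
  · have hp' : p.natDegree ≤ d := Polynomial.natDegree_le_of_degree_le hp
    have heq : (fun t : ℝ => ∑' ℓ : ℤ, Complex.exp (lam * (ℓ : ℂ)) * p.eval (ℓ : ℂ) *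
        φ (t - (ℓ : ℝ))) = fun t : ℝ => ∑ k ∈ Finset.range (p.natDegree + 1), p.coeff k *
        (Complex.exp (lam * (t : ℂ)) * ∑ j ∈ Finset.range (k + 1),
            (Nat.choose k j : ℂ) * (t : ℂ) ^ (k - j) * (-1) ^ j * omegaFun φ lam j t) := by
      funext t
      simp only [← aux_binom φ hsupp lam, ← tsum_mul_left]
      rw [← Summable.tsum_finsetSum]
      · refine tsum_congr fun ℓ => ?_
        rw [Polynomial.eval_eq_sum_range, Finset.mul_sum, Finset.sum_mul]
        refine Finset.sum_congr rfl fun j _ => ?_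
        ring
      · intro j _
        exact (aux_summable_s11 φ hsupp _ t).mul_left _
    rw [heq]
    have hof : AnalyticAt ℝ (fun t : ℝ => (t : ℂ)) x := Complex.ofRealCLM.analyticAt x
    have hexp : AnalyticAt ℝ (fun t : ℝ => Complex.exp (lam * (t : ℂ))) x :=
      (analyticAt_cexp.restrictScalars (𝕜 := ℝ)).comp (f := fun t : ℝ => lam * (t : ℂ))
        (analyticAt_const.mul hof)
    refine Finset.analyticAt_fun_sum _ fun k hk => analyticAt_const.mul (hexp.mul
      (Finset.analyticAt_fun_sum _ fun j hj => ?_))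
    have hj' : j ≤ d := by
      simp only [Finset.mem_range] at hk hj
      omega
    exact ((analyticAt_const.mul (hof.pow _)).mul analyticAt_const).mul (hA j hj' x)
end
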